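/- Assume a ∈ (0,1), b ≥ 1−a, and that α, β, p, h satisfy either α ≥ √3·β, or (α < √3·β and 4h(β+p) ≥ p⁴). If c, d > 0 with 0 < c/d ≤ (β+p)/k, then sup{ δ ∈ (a−1, 0) : F(a−1, b; a+b; 1−x^c) < F(a−1−δ, b+δ; a+b; 1−x^d) for all x ∈ (0,1) } = [(a−b−1) + √((p−1)² + 4β(c/d))]/2. -/

import Mathlib

open Real Set Filter Topology

/-- The Gaussian hypergeometric function `F(a,b;c;x)`, defined as a power series
with Pochhammer (shifted factorial) coefficients. -/
noncomputable def hyp (a b c x : ℝ) : ℝ :=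
  ∑' n : ℕ, ((∏ i ∈ Finset.range n, (a + i)) * (∏ i ∈ Finset.range n, (b + i)) /
    ((∏ i ∈ Finset.range n, (c + i)) * (Nat.factorial n))) * x ^ n

section PowerSeries

lemma summable_polynomial_mul_pow (K : ℝ) (k : ℕ) {ρ : ℝ} (h0 : 0 < ρ) (h1 : ρ < 1) :
    Summable fun n : ℕ => K * ((n : ℝ) + 1) ^ k * ρ ^ n := by
  have h := (summable_nat_add_iff 1).2
    (summable_pow_mul_geometric_of_norm_lt_one (r := ρ) k
      (by rwa [Real.norm_of_nonneg h0.le]))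
  refine (h.mul_left (K / ρ)).congr fun n => ?_
  push_cast
  rw [pow_succ ρ n]
  field_simp

lemma summable_mul_pow_of_abs_le {c : ℕ → ℝ} {K : ℝ} {k : ℕ}
    (hc : ∀ n, |c n| ≤ K * ((n : ℝ) + 1) ^ k) {y : ℝ} (hy : |y| < 1) :
    Summable fun n => c n * y ^ n := by
  obtain ⟨ρ, hyρ, hρ⟩ := exists_between hy
  refine Summable.of_norm_bounded
    (summable_polynomial_mul_pow K k ((abs_nonneg y).trans_lt hyρ) hρ) fun n => ?_
  rw [Real.norm_eq_abs, abs_mul, abs_pow]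
  have := hc n
  gcongr
  exact (abs_nonneg _).trans this

lemma abs_succ_mul_le {c : ℕ → ℝ} {K : ℝ} {k : ℕ}
    (hc : ∀ n, |c n| ≤ K * ((n : ℝ) + 1) ^ k) (n : ℕ) :
    |((n : ℝ) + 1) * c (n + 1)| ≤ (K * 2 ^ k) * ((n : ℝ) + 1) ^ (k + 1) := by
  have hK : 0 ≤ K := by simpa using (abs_nonneg _).trans (hc 0)
  have h2 : ((n + 1 : ℕ) : ℝ) + 1 ≤ 2 * ((n : ℝ) + 1) := by
    push_cast
    linarith [n.cast_nonneg (α := ℝ)]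
  rw [abs_mul, abs_of_nonneg (by positivity : (0 : ℝ) ≤ (n : ℝ) + 1)]
  calc ((n : ℝ) + 1) * |c (n + 1)|
      ≤ ((n : ℝ) + 1) * (K * (((n + 1 : ℕ) : ℝ) + 1) ^ k) := by gcongr; exact hc _
    _ ≤ ((n : ℝ) + 1) * (K * (2 * ((n : ℝ) + 1)) ^ k) := by gcongr
    _ = _ := by rw [mul_pow]; ring

lemma hasSum_mul_pow_of_shift {e : ℕ → ℝ} {y s : ℝ} (he : e 0 = 0)
    (h : HasSum (fun n => e (n + 1) * y ^ n) s) : HasSum (fun n => e n * y ^ n) (y * s) := by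
  rw [← hasSum_nat_add_iff' 1]
  simpa [he, pow_succ, mul_comm, mul_left_comm, mul_assoc] using h.mul_left y

lemma hasDerivAt_tsum_mul_pow {c : ℕ → ℝ} {K : ℝ} {k : ℕ}
    (hc : ∀ n, |c n| ≤ K * ((n : ℝ) + 1) ^ k) {y : ℝ} (hy : |y| < 1) :
    HasDerivAt (fun x => ∑' n, c n * x ^ n) (∑' n : ℕ, ((n : ℝ) + 1) * c (n + 1) * y ^ n) y := by
  obtain ⟨ρ, hyρ, hρ⟩ := exists_between hy
  have hρ0 : 0 < ρ := (abs_nonneg y).trans_lt hyρ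
  have hu : Summable fun n : ℕ => |c n| * (n * ρ ^ (n - 1)) := by
    rw [← summable_nat_add_iff 1]
    have := (summable_mul_pow_of_abs_le (abs_succ_mul_le hc)
      (y := ρ) (by rwa [abs_of_pos hρ0])).norm
    refine this.congr fun n => ?_
    rw [Real.norm_eq_abs, abs_mul, abs_mul, abs_of_nonneg (by positivity : (0 : ℝ) ≤ (n : ℝ) + 1),
      abs_of_nonneg (by positivity : (0 : ℝ) ≤ ρ ^ n)]
    push_cast
    ring
  have key := hasDerivAt_tsum_of_isPreconnected (𝕜 := ℝ) (t := Metric.ball (0 : ℝ) ρ)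
    (g := fun n x => c n * x ^ n) (g' := fun n x => c n * (n * x ^ (n - 1))) (y₀ := 0) (y := y)
    hu Metric.isOpen_ball (convex_ball _ _).isPreconnected
    (fun n x _ => (hasDerivAt_pow n x).const_mul (c n))
    (fun n x hx => by
      have hx' : |x| ≤ ρ := by simpa using (mem_ball_zero_iff.1 hx).le
      rw [Real.norm_eq_abs, abs_mul, abs_mul, abs_pow, Nat.abs_cast]
      gcongr)
    (by simpa using hρ0) (summable_mul_pow_of_abs_le hc (by simp)) (by simpa using hyρ)
  refine key.congr_deriv ?_
  have hs := (summable_mul_pow_of_abs_le (abs_succ_mul_le hc) hy).hasSum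
  refine ((hasSum_nat_add_iff' 1).1 ?_).tsum_eq
  simpa [mul_comm, mul_left_comm, mul_assoc] using hs

end PowerSeries

section Coefficients

/-- The coefficient of `x ^ n` in the series defining `hyp A B (A + B + 1) x`. -/
noncomputable def hypCoeff (A B : ℝ) (n : ℕ) : ℝ :=
  (∏ i ∈ Finset.range n, (A + i)) * (∏ i ∈ Finset.range n, (B + i)) /
    ((∏ i ∈ Finset.range n, (A + B + 1 + i)) * (Nat.factorial n))

variable {A B : ℝ}

lemma hyp_eq_tsum_hypCoeff (A B x : ℝ) :
    hyp A B (A + B + 1) x = ∑' n, hypCoeff A B n * x ^ n := rfl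

lemma hypCoeff_zero (A B : ℝ) : hypCoeff A B 0 = 1 := by simp [hypCoeff]

lemma hypCoeff_succ (hA : -1 < A) (hB : 0 < B) (n : ℕ) :
    hypCoeff A B (n + 1) = hypCoeff A B n * ((A + n) * (B + n)) / ((A + B + 1 + n) * (n + 1)) := by
  have h1 : ∏ i ∈ Finset.range n, (A + B + 1 + i) ≠ 0 :=
    (Finset.prod_pos fun i _ => by linarith [i.cast_nonneg (α := ℝ)]).ne'
  have h2 : A + B + 1 + n ≠ 0 := by linarith [n.cast_nonneg (α := ℝ)]
  have h3 : (n.factorial : ℝ) ≠ 0 := by positivity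
  simp only [hypCoeff, Finset.prod_range_succ, Nat.factorial_succ]
  push_cast
  field_simp

lemma hypCoeff_succ_neg (hA : -1 < A) (hA' : A < 0) (hB : 0 < B) (n : ℕ) :
    hypCoeff A B (n + 1) < 0 := by
  induction n with
  | zero =>
    rw [hypCoeff_succ hA hB, hypCoeff_zero]
    apply div_neg_of_neg_of_pos
    · simpa using mul_neg_of_neg_of_pos hA' hB
    · norm_num; linarith
  | succ n ih =>
    rw [hypCoeff_succ hA hB]
    have hn := n.cast_nonneg (α := ℝ)
    push_cast
    apply div_neg_of_neg_of_pos
    · exact mul_neg_of_neg_of_pos ih (mul_pos (by linarith) (by linarith))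
    · exact mul_pos (by linarith) (by linarith)

/-- The absolute values of the coefficients are dominated by those of `(1 - x) ^ (-A)`,
whose partial sums at `x = 1` are `(A + 1)_n / n!`. -/
lemma sum_range_hypCoeff_pos (hA : -1 < A) (hA' : A < 0) (hB : 0 < B) (n : ℕ) :
    0 < ∑ i ∈ Finset.range (n + 1), hypCoeff A B i := by
  have main : ∀ n : ℕ, 0 < ∑ i ∈ Finset.range (n + 1), hypCoeff A B i ∧
      A * ∑ i ∈ Finset.range (n + 1), hypCoeff A B i ≤ (n + 1 : ℝ) * hypCoeff A B (n + 1) := by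
    intro n
    induction n with
    | zero =>
      have h : hypCoeff A B 1 = A * B / (A + B + 1) := by
        simpa [hypCoeff_zero] using hypCoeff_succ hA hB 0
      refine ⟨by simp [hypCoeff_zero], ?_⟩
      simp only [zero_add, Finset.range_one, Finset.sum_singleton, hypCoeff_zero, h]
      rw [Nat.cast_zero, zero_add, one_mul, le_div_iff₀ (by linarith)]
      nlinarith
    | succ n ih =>
      obtain ⟨ih1, ih2⟩ := ih
      have hn := n.cast_nonneg (α := ℝ)
      have hneg := hypCoeff_succ_neg hA hA' hB n
      rw [Finset.sum_range_succ]
      set S := ∑ i ∈ Finset.range (n + 1), hypCoeff A B i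
      refine ⟨by nlinarith, ?_⟩
      have h := hypCoeff_succ hA hB (n + 1)
      rw [h]
      push_cast
      rw [mul_div_assoc', le_div_iff₀ (mul_pos (by linarith) (by linarith))]
      have h1 : A * (S + hypCoeff A B (n + 1)) ≤ hypCoeff A B (n + 1) * (A + (n + 1)) := by
        nlinarith
      have h2 : (hypCoeff A B (n + 1) * (A + (n + 1))) * (A + B + 1 + (n + 1)) ≤
          (hypCoeff A B (n + 1) * (A + (n + 1))) * (B + (n + 1)) := by
        apply mul_le_mul_of_nonpos_left (by linarith)
        exact mul_nonpos_of_nonpos_of_nonneg hneg.le (by linarith)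
      have h3 := mul_le_mul_of_nonneg_right h1 (by linarith : 0 ≤ A + B + 1 + ((n : ℝ) + 1))
      have h4 := mul_le_mul_of_nonneg_right (h3.trans h2) (by linarith : 0 ≤ (n : ℝ) + 1 + 1)
      linarith
  exact (main n).1

lemma abs_hypCoeff_le (hA : -1 < A) (hA' : A < 0) (hB : 0 < B) (n : ℕ) :
    |hypCoeff A B n| ≤ 1 * ((n : ℝ) + 1) ^ 0 := by
  cases n with
  | zero => simp [hypCoeff_zero]
  | succ n =>
    have h := sum_range_hypCoeff_pos hA hA' hB (n + 1)
    rw [Finset.sum_range_succ, Finset.sum_range_succ', hypCoeff_zero] at h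
    have h' : ∑ i ∈ Finset.range n, hypCoeff A B (i + 1) ≤ 0 :=
      Finset.sum_nonpos fun i _ => (hypCoeff_succ_neg hA hA' hB i).le
    rw [abs_of_neg (hypCoeff_succ_neg hA hA' hB n)]
    simp only [pow_zero, mul_one]
    linarith

end Coefficients

section Derivatives

/-- The derivative of `fun x => hyp A B (A + B + 1) x`, as a power series. -/
noncomputable def hypDeriv (A B x : ℝ) : ℝ :=
  ∑' n : ℕ, ((n : ℝ) + 1) * hypCoeff A B (n + 1) * x ^ n

/-- The second derivative of `fun x => hyp A B (A + B + 1) x`, as a power series. -/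
noncomputable def hypSecondDeriv (A B x : ℝ) : ℝ :=
  ∑' n : ℕ, ((n : ℝ) + 1) * (((n + 1 : ℕ) + 1 : ℝ) * hypCoeff A B (n + 1 + 1)) * x ^ n

variable {A B y : ℝ}

lemma hasDerivAt_hyp (hA : -1 < A) (hA' : A < 0) (hB : 0 < B) (hy : |y| < 1) :
    HasDerivAt (hyp A B (A + B + 1)) (hypDeriv A B y) y :=
  hasDerivAt_tsum_mul_pow (abs_hypCoeff_le hA hA' hB) hy

lemma hasDerivAt_hypDeriv (hA : -1 < A) (hA' : A < 0) (hB : 0 < B) (hy : |y| < 1) :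
    HasDerivAt (hypDeriv A B) (hypSecondDeriv A B y) y :=
  hasDerivAt_tsum_mul_pow (c := fun n => ((n : ℝ) + 1) * hypCoeff A B (n + 1))
    (abs_succ_mul_le (abs_hypCoeff_le hA hA' hB)) hy

/-- The hypergeometric differential equation with parameters `A`, `B`, `A + B + 1`. -/
lemma hyp_differential_equation (hA : -1 < A) (hA' : A < 0) (hB : 0 < B) (hy : |y| < 1) :
    y * (1 - y) * hypSecondDeriv A B y + (A + B + 1) * (1 - y) * hypDeriv A B y
      - A * B * hyp A B (A + B + 1) y = 0 := by
  have hb := abs_hypCoeff_le hA hA' hB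
  have s0 : HasSum (fun n => hypCoeff A B n * y ^ n) (hyp A B (A + B + 1) y) :=
    (summable_mul_pow_of_abs_le hb hy).hasSum
  have s1 : HasSum (fun n : ℕ => ((n : ℝ) + 1) * hypCoeff A B (n + 1) * y ^ n)
      (hypDeriv A B y) := (summable_mul_pow_of_abs_le (abs_succ_mul_le hb) hy).hasSum
  have s2 : HasSum (fun n : ℕ =>
      ((n : ℝ) + 1) * (((n + 1 : ℕ) + 1 : ℝ) * hypCoeff A B (n + 1 + 1)) * y ^ n)
      (hypSecondDeriv A B y) :=
    (summable_mul_pow_of_abs_le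
      (c := fun n : ℕ => ((n : ℝ) + 1) * (((n + 1 : ℕ) + 1 : ℝ) * hypCoeff A B (n + 1 + 1)))
      (abs_succ_mul_le (c := fun n => ((n : ℝ) + 1) * hypCoeff A B (n + 1))
        (abs_succ_mul_le hb)) hy).hasSum
  have t1 : HasSum (fun n : ℕ => (n * hypCoeff A B n) * y ^ n) (y * hypDeriv A B y) :=
    hasSum_mul_pow_of_shift (by simp) (by simpa using s1)
  have t2 : HasSum (fun n : ℕ => (n * (((n : ℝ) + 1) * hypCoeff A B (n + 1))) * y ^ n)
      (y * hypSecondDeriv A B y) :=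
    hasSum_mul_pow_of_shift (by simp) (by simpa using s2)
  have t3 : HasSum (fun n : ℕ => (((n : ℝ) - 1) * (n * hypCoeff A B n)) * y ^ n)
      (y * (y * hypSecondDeriv A B y)) :=
    hasSum_mul_pow_of_shift (by simp) (by simpa using t2)
  have total := ((t2.sub t3).add ((s1.sub t1).mul_left (A + B + 1))).sub (s0.mul_left (A * B))
  have hz : ∀ n : ℕ, (n * (((n : ℝ) + 1) * hypCoeff A B (n + 1))) * y ^ n
      - (((n : ℝ) - 1) * (n * hypCoeff A B n)) * y ^ n
      + (A + B + 1) * (((n : ℝ) + 1) * hypCoeff A B (n + 1) * y ^ n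
        - (n * hypCoeff A B n) * y ^ n)
      - A * B * (hypCoeff A B n * y ^ n) = 0 := by
    intro n
    have hn := n.cast_nonneg (α := ℝ)
    have h : hypCoeff A B (n + 1) * ((A + B + 1 + n) * (n + 1))
        = hypCoeff A B n * ((A + n) * (B + n)) := by
      rw [hypCoeff_succ hA hB,
        div_mul_cancel₀ _ (mul_pos (by linarith) (by linarith)).ne']
    linear_combination y ^ n * h
  have := total.unique (by simpa only [hz] using hasSum_zero)
  linear_combination this

lemma hyp_zero (A B : ℝ) : hyp A B (A + B + 1) 0 = 1 := by
  rw [hyp_eq_tsum_hypCoeff, tsum_eq_single 0 (by simp +contextual)]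
  simp [hypCoeff_zero]

lemma hypDeriv_zero (hA : -1 < A) (hB : 0 < B) : hypDeriv A B 0 = A * B / (A + B + 1) := by
  rw [hypDeriv, tsum_eq_single 0 (by simp +contextual)]
  simpa [hypCoeff_zero] using hypCoeff_succ hA hB 0

lemma hyp_pos (hA : -1 < A) (hA' : A < 0) (hB : 0 < B) (h0 : 0 ≤ y) (h1 : y < 1) :
    0 < hyp A B (A + B + 1) y := by
  have hs : HasSum (fun n => hypCoeff A B n * y ^ n) (hyp A B (A + B + 1) y) :=
    (summable_mul_pow_of_abs_le (abs_hypCoeff_le hA hA' hB) (by rwa [abs_of_nonneg h0])).hasSum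
  have hle : 1 - y ≤ hyp A B (A + B + 1) y := by
    refine ge_of_tendsto ((tendsto_add_atTop_iff_nat 1).2 hs.tendsto_sum_nat)
      (Eventually.of_forall fun n => ?_)
    have hpos := sum_range_hypCoeff_pos hA hA' hB n
    rw [Finset.sum_range_succ', hypCoeff_zero] at hpos ⊢
    have hle : y * ∑ i ∈ Finset.range n, hypCoeff A B (i + 1)
        ≤ ∑ i ∈ Finset.range n, hypCoeff A B (i + 1) * y ^ (i + 1) := by
      rw [Finset.mul_sum]
      refine Finset.sum_le_sum fun i _ => ?_
      rw [mul_comm]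
      refine mul_le_mul_of_nonpos_left ?_ (hypCoeff_succ_neg hA hA' hB i).le
      exact pow_le_of_le_one h0 h1.le i.succ_ne_zero
    simp only [pow_zero, mul_one]
    nlinarith
  linarith

lemma hypDeriv_nonpos (hA : -1 < A) (hA' : A < 0) (hB : 0 < B) (h0 : 0 ≤ y) :
    hypDeriv A B y ≤ 0 :=
  tsum_nonpos fun n => mul_nonpos_of_nonpos_of_nonneg
    (mul_nonpos_of_nonneg_of_nonpos (by positivity) (hypCoeff_succ_neg hA hA' hB n).le)
    (by positivity)

end Derivatives

section Comparison

lemma exists_gt_lt_of_hasDerivAt_neg {f : ℝ → ℝ} {m t u : ℝ} (hf : HasDerivAt f m t) (hm : m < 0)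
    (htu : t < u) : ∃ z ∈ Ioo t u, f z < f t := by
  have h := ((hasDerivAt_iff_tendsto_slope.1 hf).mono_left
    (nhdsGT_le_nhdsNE t)).eventually_lt_const hm
  obtain ⟨z, hz, hzI⟩ := (h.and (Ioo_mem_nhdsGT htu)).exists
  refine ⟨z, hzI, ?_⟩
  rw [slope_def_field, div_neg_iff] at hz
  rcases hz with hz | hz <;> linarith [hzI.1]

lemma exists_lt_lt_of_hasDerivAt_pos {f : ℝ → ℝ} {m t u : ℝ} (hf : HasDerivAt f m t) (hm : 0 < m)
    (hut : u < t) : ∃ z ∈ Ioo u t, f z < f t := by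
  have hf' : HasDerivAt (fun z => f (-z)) (-m) (-t) := by
    rw [← neg_neg t] at hf
    exact (hf.comp (-t) (hasDerivAt_neg (-t))).congr_deriv (mul_neg_one m)
  obtain ⟨z, hz, hlt⟩ := exists_gt_lt_of_hasDerivAt_neg hf' (by linarith) (neg_lt_neg hut)
  exact ⟨-z, ⟨by linarith [hz.2], by linarith [hz.1]⟩, by simpa using hlt⟩

/-- A function on `(0, 1]` vanishing at `1` and strictly decreasing wherever it is nonpositive
is positive on `(0, 1)`. -/
lemma pos_of_deriv_neg_of_nonpos {f f' : ℝ → ℝ} (hc : ContinuousOn f (Ioc 0 1)) (h1 : f 1 = 0)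
    (hd : ∀ t ∈ Ioo (0 : ℝ) 1, HasDerivAt f (f' t) t)
    (hneg : ∀ t ∈ Ioo (0 : ℝ) 1, f t ≤ 0 → f' t < 0) : ∀ t ∈ Ioo (0 : ℝ) 1, 0 < f t := by
  intro t ht
  by_contra! hft
  obtain ⟨m, hm, hmin⟩ := isCompact_Icc.exists_isMinOn (nonempty_Icc.2 ht.2.le)
    (hc.mono fun z hz => ⟨ht.1.trans_le hz.1, hz.2⟩ : ContinuousOn f (Icc t 1))
  have descent : ∀ z ∈ Icc t 1, z < 1 → f z ≤ 0 → f m < f z := by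
    intro z hz hz1 hfz
    have hzI : z ∈ Ioo (0 : ℝ) 1 := ⟨ht.1.trans_le hz.1, hz1⟩
    obtain ⟨w, hw, hlt⟩ := exists_gt_lt_of_hasDerivAt_neg (hd z hzI) (hneg z hzI hfz) hz1
    exact (hmin ⟨hz.1.trans hw.1.le, hw.2.le⟩).trans_lt hlt
  have hmt := descent t ⟨le_rfl, ht.2.le⟩ ht.2 hft
  rcases hm.2.lt_or_eq with hm1 | rfl
  · exact (descent m hm hm1 (hmt.le.trans hft)).false
  · linarith

/-- The logarithmic derivative `s ↦ s * d/ds` of `s ↦ hyp A B (A + B + 1) (1 - s)`. -/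
noncomputable def hypTheta (A B s : ℝ) : ℝ := -(s * hypDeriv A B (1 - s))

variable {A B s : ℝ}

lemma hasDerivAt_hyp_one_sub (hA : -1 < A) (hA' : A < 0) (hB : 0 < B) (hs : s ∈ Ioc (0 : ℝ) 1) :
    HasDerivAt (fun s => hyp A B (A + B + 1) (1 - s)) (hypTheta A B s / s) s := by
  have hy : |1 - s| < 1 := by rw [abs_lt]; constructor <;> linarith [hs.1, hs.2]
  have h := (hasDerivAt_hyp hA hA' hB hy).comp s ((hasDerivAt_id s).const_sub 1)
  refine h.congr_deriv ?_
  rw [hypTheta]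
  field_simp [hs.1.ne']

lemma hasDerivAt_hypTheta_secondDeriv (hA : -1 < A) (hA' : A < 0) (hB : 0 < B)
    (hs : s ∈ Ioc (0 : ℝ) 1) :
    HasDerivAt (hypTheta A B) (-hypDeriv A B (1 - s) + s * hypSecondDeriv A B (1 - s)) s := by
  have hy : |1 - s| < 1 := by rw [abs_lt]; constructor <;> linarith [hs.1, hs.2]
  have h := (hasDerivAt_hypDeriv hA hA' hB hy).comp s ((hasDerivAt_id s).const_sub 1)
  refine ((hasDerivAt_id s).mul h).neg.congr_deriv ?_
  simp
  ring

lemma hasDerivAt_hypTheta (hA : -1 < A) (hA' : A < 0) (hB : 0 < B) (hs : s ∈ Ioo (0 : ℝ) 1) :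
    HasDerivAt (hypTheta A B)
      ((hypTheta A B s + s / (1 - s) *
        ((A + B + 1) * hypTheta A B s + A * B * hyp A B (A + B + 1) (1 - s))) / s) s := by
  refine (hasDerivAt_hypTheta_secondDeriv hA hA' hB ⟨hs.1, hs.2.le⟩).congr_deriv ?_
  have hy : |1 - s| < 1 := by rw [abs_lt]; constructor <;> linarith [hs.1, hs.2]
  have h := hyp_differential_equation hA hA' hB hy
  have h0 := hs.1.ne'
  have h1 : 1 - s ≠ 0 := by linarith [hs.2]
  rw [hypTheta]
  field_simp
  linear_combination h

lemma hypTheta_one (hA : -1 < A) (hB : 0 < B) : hypTheta A B 1 = -(A * B) / (A + B + 1) := by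
  rw [hypTheta, sub_self, hypDeriv_zero hA hB]
  ring

lemma hypTheta_nonneg (hA : -1 < A) (hA' : A < 0) (hB : 0 < B) (hs : s ∈ Ioc (0 : ℝ) 1) :
    0 ≤ hypTheta A B s := by
  have := hypDeriv_nonpos hA hA' hB (sub_nonneg.2 hs.2)
  rw [hypTheta]
  nlinarith [hs.1]

lemma hyp_one_sub_pos (hA : -1 < A) (hA' : A < 0) (hB : 0 < B) (hs : s ∈ Ioc (0 : ℝ) 1) :
    0 < hyp A B (A + B + 1) (1 - s) :=
  hyp_pos hA hA' hB (sub_nonneg.2 hs.2) (by linarith [hs.1])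

lemma mul_hypTheta_lt (hA : -1 < A) (hA' : A < 0) (hB : 0 < B) (hs : s ∈ Ioo (0 : ℝ) 1) :
    (A + B + 1) * hypTheta A B s < -(A * B) * hyp A B (A + B + 1) (1 - s) := by
  have hp : 0 < A + B + 1 := by linarith
  have hAB : 0 < -(A * B) := by nlinarith
  rw [← sub_pos]
  refine pos_of_deriv_neg_of_nonpos
    (f := fun s => -(A * B) * hyp A B (A + B + 1) (1 - s) - (A + B + 1) * hypTheta A B s)
    (fun s hs => (((hasDerivAt_hyp_one_sub hA hA' hB hs).const_mul _).sub
      ((hasDerivAt_hypTheta_secondDeriv hA hA' hB hs).const_mul _)).continuousAt.continuousWithinAt)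
    ?_ (fun s hs => ((hasDerivAt_hyp_one_sub hA hA' hB ⟨hs.1, hs.2.le⟩).const_mul _).sub
      ((hasDerivAt_hypTheta hA hA' hB hs).const_mul _)) ?_ s hs
  · simp only [sub_self, hyp_zero, hypTheta_one hA hB]
    field_simp
    ring
  · intro s hs hle
    have hF := hyp_one_sub_pos hA hA' hB ⟨hs.1, hs.2.le⟩
    have hU := hypTheta_nonneg hA hA' hB ⟨hs.1, hs.2.le⟩
    have h1 : 0 < s / (1 - s) := div_pos hs.1 (by linarith [hs.2])
    set F := hyp A B (A + B + 1) (1 - s)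
    set U := hypTheta A B s
    have hUpos : 0 < U := by
      have : 0 < (A + B + 1) * U := (mul_pos hAB hF).trans_le (by linarith)
      exact pos_of_mul_pos_right this hp.le
    have e : -(A * B) * (U / s)
        - (A + B + 1) * ((U + s / (1 - s) * ((A + B + 1) * U + A * B * F)) / s)
        = -((((A + 1) * (B + 1)) * U
          + (A + B + 1) * (s / (1 - s)) * ((A + B + 1) * U + A * B * F)) / s) := by
      ring
    rw [e, neg_lt_zero]
    refine div_pos (add_pos_of_pos_of_nonneg ?_ ?_) hs.1
    · exact mul_pos (mul_pos (by linarith) (by linarith)) hUpos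
    · exact mul_nonneg (mul_nonneg hp.le h1.le) (by linarith)

end Comparison

section Main

/-- Equivalent to the weighted AM-GM inequality `t ^ (1 - r) < r + (1 - r) * t`. -/
lemma div_one_sub_lt_mul_rpow_div {r t : ℝ} (hr : r ∈ Ioo (0 : ℝ) 1) (ht : t ∈ Ioo (0 : ℝ) 1) :
    t / (1 - t) < r * (t ^ r / (1 - t ^ r)) := by
  have hs0 : 0 < t ^ r := rpow_pos_of_pos ht.1 r
  have hs1 : t ^ r < 1 := rpow_lt_one ht.1.le ht.2 hr.1
  have hbern : t ^ (1 - r) < 1 + (1 - r) * (t - 1) := by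
    have := rpow_one_add_lt_one_add_mul_self (s := t - 1) (p := 1 - r) (by linarith [ht.1])
      (by linarith [ht.2]) (by linarith [hr.2]) (by linarith [hr.1])
    simpa using this
  have hmul : t = t ^ r * t ^ (1 - r) := by
    rw [← rpow_add ht.1]
    simp
  rw [mul_div_assoc', div_lt_div_iff₀ (by linarith [ht.2]) (by linarith)]
  nlinarith [mul_lt_mul_of_pos_left hbern hs0]

variable {A B A₀ B₀ r : ℝ}

lemma hasDerivAt_rpow_const_div {t : ℝ} (ht : 0 < t) :
    HasDerivAt (fun t : ℝ => t ^ r) (r * t ^ r / t) t := by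
  refine (hasDerivAt_rpow_const (Or.inl ht.ne')).congr_deriv ?_
  rw [rpow_sub_one ht.ne', mul_div_assoc]

lemma rpow_mem_Ioc {t : ℝ} (hr : 0 < r) (ht : t ∈ Ioc (0 : ℝ) 1) : t ^ r ∈ Ioc (0 : ℝ) 1 :=
  ⟨rpow_pos_of_pos ht.1 r, rpow_le_one ht.1.le ht.2 hr.le⟩

lemma hasDerivAt_hyp_one_sub_rpow {t : ℝ} (hA : -1 < A) (hA' : A < 0) (hB : 0 < B)
    (hr : 0 < r) (ht : t ∈ Ioc (0 : ℝ) 1) :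
    HasDerivAt (fun t : ℝ => hyp A B (A + B + 1) (1 - t ^ r))
      (r * hypTheta A B (t ^ r) / t) t := by
  have hs := rpow_mem_Ioc hr ht
  refine ((hasDerivAt_hyp_one_sub hA hA' hB hs).comp t
    (hasDerivAt_rpow_const_div ht.1)).congr_deriv ?_
  have := hs.1.ne'
  field_simp

lemma hasDerivAt_hypTheta_rpow {t : ℝ} (hA : -1 < A) (hA' : A < 0) (hB : 0 < B)
    (hr : 0 < r) (ht : t ∈ Ioo (0 : ℝ) 1) :
    HasDerivAt (fun t : ℝ => hypTheta A B (t ^ r))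
      (r * (hypTheta A B (t ^ r) + t ^ r / (1 - t ^ r) *
        ((A + B + 1) * hypTheta A B (t ^ r) + A * B * hyp A B (A + B + 1) (1 - t ^ r))) / t) t := by
  have hs : t ^ r ∈ Ioo (0 : ℝ) 1 := ⟨rpow_pos_of_pos ht.1 r, rpow_lt_one ht.1.le ht.2 hr⟩
  refine ((hasDerivAt_hypTheta hA hA' hB hs).comp t
    (hasDerivAt_rpow_const_div ht.1)).congr_deriv ?_
  have := hs.1.ne'
  field_simp

/-- Positivity of the Wronskian of the two sides of `hyp_one_sub_rpow_lt`. -/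
lemma wronskian_pos (hA : -1 < A) (hA' : A < 0) (hB : 0 < B)
    (hA₀ : -1 < A₀) (hA₀' : A₀ < 0) (hB₀ : 0 < B₀) (hsum : A₀ + B₀ = A + B)
    (hr : r ∈ Ioo (0 : ℝ) 1) (hmul : A * B = r * (A₀ * B₀)) {t : ℝ} (ht : t ∈ Ioo (0 : ℝ) 1) :
    0 < hyp A B (A + B + 1) (1 - t) * (r * hypTheta A₀ B₀ (t ^ r))
      - hypTheta A B t * hyp A₀ B₀ (A₀ + B₀ + 1) (1 - t ^ r) := by
  refine pos_of_deriv_neg_of_nonpos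
    (f := fun t => hyp A B (A + B + 1) (1 - t) * (r * hypTheta A₀ B₀ (t ^ r))
      - hypTheta A B t * hyp A₀ B₀ (A₀ + B₀ + 1) (1 - t ^ r))
    (fun t ht => ?_) ?_
    (fun t ht => ((hasDerivAt_hyp_one_sub hA hA' hB ⟨ht.1, ht.2.le⟩).mul
      ((hasDerivAt_hypTheta_rpow hA₀ hA₀' hB₀ hr.1 ht).const_mul r)).sub
      ((hasDerivAt_hypTheta hA hA' hB ht).mul
        (hasDerivAt_hyp_one_sub_rpow hA₀ hA₀' hB₀ hr.1 ⟨ht.1, ht.2.le⟩)))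
    (fun t ht hle => ?_) t ht
  · have hs := rpow_mem_Ioc hr.1 ht
    exact (((hasDerivAt_hyp_one_sub hA hA' hB ht).mul
      (((hasDerivAt_hypTheta_secondDeriv hA₀ hA₀' hB₀ hs).comp t
        (hasDerivAt_rpow_const_div ht.1)).const_mul r)).sub
      ((hasDerivAt_hypTheta_secondDeriv hA hA' hB ht).mul
        (hasDerivAt_hyp_one_sub_rpow hA₀ hA₀' hB₀ hr.1 ht))).continuousAt.continuousWithinAt
  · simp only [one_rpow, sub_self, hyp_zero, hypTheta_one hA hB, hypTheta_one hA₀ hB₀]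
    rw [hsum, hmul]
    ring
  · have ht' : t ∈ Ioc (0 : ℝ) 1 := ⟨ht.1, ht.2.le⟩
    have hs := rpow_mem_Ioc hr.1 ht'
    have hs1 : t ^ r < 1 := rpow_lt_one ht.1.le ht.2 hr.1
    have hF := hyp_one_sub_pos hA hA' hB ht'
    have hG := hyp_one_sub_pos hA₀ hA₀' hB₀ hs
    have hU := hypTheta_nonneg hA hA' hB ht'
    have hUF := mul_hypTheta_lt hA hA' hB ht
    have hZ := div_one_sub_lt_mul_rpow_div hr ht
    have hsdiv : 0 < t ^ r / (1 - t ^ r) := div_pos hs.1 (by linarith)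
    have ht0 := ht.1
    rw [hsum] at hle hG ⊢
    set F := hyp A B (A + B + 1) (1 - t)
    set G := hyp A₀ B₀ (A + B + 1) (1 - t ^ r)
    set U := hypTheta A B t
    set V := hypTheta A₀ B₀ (t ^ r)
    set s := t ^ r
    set S := s / (1 - s)
    set T := t / (1 - t)
    have e : U / t * (r * V) + F * (r * (r * (V + S * ((A + B + 1) * V + A₀ * B₀ * G)) / t))
        - ((U + T * ((A + B + 1) * U + A * B * F)) / t * G + U * (r * V / t))
        = (r * (1 + (A + B + 1) * S) * (F * (r * V) - U * G) + G * (-(1 - r) * U +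
          (r * S - T) * ((A + B + 1) * U + A * B * F))) / t := by
      field_simp
      linear_combination (-F * G * S * r) * hmul
    rw [e]
    refine div_neg_of_neg_of_pos (add_neg_of_nonpos_of_neg ?_ ?_) ht0
    · refine mul_nonpos_of_nonneg_of_nonpos (mul_nonneg hr.1.le ?_) hle
      have : 0 ≤ (A + B + 1) * S := mul_nonneg (by linarith) hsdiv.le
      linarith
    · refine mul_neg_of_pos_of_neg hG (add_neg_of_nonpos_of_neg ?_ ?_)
      · nlinarith [hr.2]
      · exact mul_neg_of_pos_of_neg (by linarith) (by linarith)

/-- Comparison of two hypergeometric functions whose first-order expansions at `t = 1` agree. -/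
lemma hyp_one_sub_rpow_lt (hA : -1 < A) (hA' : A < 0) (hB : 0 < B)
    (hA₀ : -1 < A₀) (hA₀' : A₀ < 0) (hB₀ : 0 < B₀) (hsum : A₀ + B₀ = A + B)
    (hr : r ∈ Ioo (0 : ℝ) 1) (hmul : A * B = r * (A₀ * B₀)) {t : ℝ} (ht : t ∈ Ioo (0 : ℝ) 1) :
    hyp A₀ B₀ (A₀ + B₀ + 1) (1 - t ^ r) < hyp A B (A + B + 1) (1 - t) := by
  have hd : ∀ u ∈ Icc t 1, HasDerivAt
      (fun u => hyp A₀ B₀ (A₀ + B₀ + 1) (1 - u ^ r) / hyp A B (A + B + 1) (1 - u))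
      ((r * hypTheta A₀ B₀ (u ^ r) / u * hyp A B (A + B + 1) (1 - u)
        - hyp A₀ B₀ (A₀ + B₀ + 1) (1 - u ^ r) * (hypTheta A B u / u))
        / hyp A B (A + B + 1) (1 - u) ^ 2) u := by
    intro u hu
    have hu' : u ∈ Ioc (0 : ℝ) 1 := ⟨ht.1.trans_le hu.1, hu.2⟩
    exact (hasDerivAt_hyp_one_sub_rpow hA₀ hA₀' hB₀ hr.1 hu').div
      (hasDerivAt_hyp_one_sub hA hA' hB hu') (hyp_one_sub_pos hA hA' hB hu').ne'
  have hmono := strictMonoOn_of_deriv_pos (convex_Icc t 1)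
    (fun u hu => (hd u hu).continuousAt.continuousWithinAt) (fun u hu => by
      rw [interior_Icc] at hu
      rw [(hd u ⟨hu.1.le, hu.2.le⟩).deriv]
      have hu' : u ∈ Ioo (0 : ℝ) 1 := ⟨ht.1.trans hu.1, hu.2⟩
      refine div_pos ?_ (pow_pos (hyp_one_sub_pos hA hA' hB ⟨hu'.1, hu'.2.le⟩) 2)
      have h := div_pos (wronskian_pos hA hA' hB hA₀ hA₀' hB₀ hsum hr hmul hu') hu'.1
      convert h using 1
      ring)
  have h := hmono (left_mem_Icc.2 ht.2.le) (right_mem_Icc.2 ht.2.le) ht.2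
  simp only [one_rpow, sub_self, hyp_zero, div_one] at h
  exact (div_lt_one (hyp_one_sub_pos hA hA' hB ⟨ht.1, ht.2.le⟩)).1 h

/-- The coefficient comparison at `t = 1` is also necessary. -/
lemma neg_mul_le_of_hyp_one_sub_rpow_lt (hA : -1 < A) (hA' : A < 0) (hB : 0 < B)
    (hA₀ : -1 < A₀) (hA₀' : A₀ < 0) (hB₀ : 0 < B₀) (hsum : A₀ + B₀ = A + B) (hr : 0 < r)
    (hlt : ∀ t ∈ Ioo (0 : ℝ) 1,
      hyp A₀ B₀ (A₀ + B₀ + 1) (1 - t ^ r) < hyp A B (A + B + 1) (1 - t)) :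
    -(A * B) ≤ r * -(A₀ * B₀) := by
  by_contra! hcon
  have h1 : (1 : ℝ) ∈ Ioc (0 : ℝ) 1 := ⟨one_pos, le_rfl⟩
  have hd := (hasDerivAt_hyp_one_sub hA hA' hB h1).sub
    (hasDerivAt_hyp_one_sub_rpow hA₀ hA₀' hB₀ hr h1)
  obtain ⟨z, hz, hzlt⟩ := exists_lt_lt_of_hasDerivAt_pos hd (by
    rw [one_rpow, hypTheta_one hA hB, hypTheta_one hA₀ hB₀, hsum, div_one, div_one,
      mul_div_assoc', ← sub_div]
    exact div_pos (by linarith) (by linarith)) one_pos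
  simp only [Pi.sub_apply, one_rpow, sub_self, hyp_zero] at hzlt
  linarith [hlt z hz]

end Main

theorem stmt3 (a b c d α β p h k : ℝ)
    (ha : a ∈ Ioo (0:ℝ) 1) (hb : 1 - a ≤ b)
    (hα : α = a * (b + 1)) (hβ : β = b * (1 - a)) (hp : p = a + b)
    (hh : h = α * β * (p + β)) (hk : k = β * (p + 1) + p)
    (hcase : α ≥ Real.sqrt 3 * β ∨ (α < Real.sqrt 3 * β ∧ 4 * h * (β + p) ≥ p ^ 4))
    (hc : 0 < c) (hd : 0 < d) (hcd : c / d ≤ (β + p) / k) :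
    sSup {δ : ℝ | δ ∈ Ioo (a - 1) 0 ∧ ∀ x ∈ Ioo (0:ℝ) 1,
        hyp (a - 1) b (a + b) (1 - x ^ c) < hyp (a - 1 - δ) (b + δ) (a + b) (1 - x ^ d)}
      = ((a - b - 1) + Real.sqrt ((p - 1) ^ 2 + 4 * β * (c / d))) / 2 := by
  obtain ⟨ha0, ha1⟩ := ha
  have hb0 : 0 < b := by linarith
  have hβ0 : 0 < β := by rw [hβ]; exact mul_pos hb0 (by linarith)
  have hp1 : 1 ≤ p := by linarith
  have hr0 : 0 < c / d := div_pos hc hd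
  have hr1 : c / d < 1 := by
    refine hcd.trans_lt ((div_lt_one (by rw [hk]; nlinarith)).2 ?_)
    rw [hk]
    nlinarith
  have hpow : ∀ x ∈ Ioo (0 : ℝ) 1, (x ^ d) ^ (c / d) = x ^ c := fun x hx => by
    rw [← rpow_mul hx.1.le, mul_div_cancel₀ _ hd.ne']
  have hxd : ∀ x ∈ Ioo (0 : ℝ) 1, x ^ d ∈ Ioo (0 : ℝ) 1 := fun x hx =>
    ⟨rpow_pos_of_pos hx.1 d, rpow_lt_one hx.1.le hx.2 hd⟩
  set r := c / d
  set D := Real.sqrt ((p - 1) ^ 2 + 4 * β * r)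
  have hDsq : D ^ 2 = (p - 1) ^ 2 + 4 * β * r := Real.sq_sqrt (by positivity)
  have hD0 : 0 ≤ D := Real.sqrt_nonneg _
  set δ₀ := ((a - b - 1) + D) / 2 with hδ₀
  have hroot : (a - 1 - δ₀) * (b + δ₀) = r * ((a - 1) * b) := by
    have : (a - 1 - δ₀) * (b + δ₀) = ((p - 1) ^ 2 - D ^ 2) / 4 := by
      rw [hδ₀, hp]
      ring
    rw [this, hDsq, hβ]
    ring
  have hβr : 0 < β * r := mul_pos hβ0 hr0
  have hDlow : p - 1 < D := by nlinarith
  have hDup : D < b + 1 - a := by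
    have : D ^ 2 < (b + 1 - a) ^ 2 := by
      rw [hDsq]
      have : β * r < β := by nlinarith
      nlinarith
    nlinarith
  have hδ₀I : δ₀ ∈ Ioo (a - 1) 0 := ⟨by rw [hδ₀]; linarith, by rw [hδ₀]; linarith⟩
  have hc₀ : a + b = (a - 1) + b + 1 := by ring
  have hcδ : ∀ δ : ℝ, (a - 1 - δ) + (b + δ) + 1 = a + b := fun δ => by ring
  refine IsGreatest.csSup_eq ⟨⟨hδ₀I, fun x hx => ?_⟩, fun δ hδ => ?_⟩
  · have := hyp_one_sub_rpow_lt (A := a - 1 - δ₀) (B := b + δ₀) (A₀ := a - 1) (B₀ := b) (r := r)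
      (by linarith [hδ₀I.2]) (by linarith [hδ₀I.1]) (by linarith [hδ₀I.1]) (by linarith)
      (by linarith) hb0 (by ring) ⟨hr0, hr1⟩ hroot (hxd x hx)
    rwa [hpow x hx, hcδ, ← hc₀] at this
  · obtain ⟨hδI, hδ⟩ := hδ
    have := neg_mul_le_of_hyp_one_sub_rpow_lt (A := a - 1 - δ) (B := b + δ) (A₀ := a - 1)
      (B₀ := b) (r := r) (by linarith [hδI.2]) (by linarith [hδI.1]) (by linarith [hδI.1])
      (by linarith) (by linarith) hb0 (by ring) hr0 (fun t ht => by
        have hx : t ^ d⁻¹ ∈ Ioo (0 : ℝ) 1 :=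
          ⟨rpow_pos_of_pos ht.1 _, rpow_lt_one ht.1.le ht.2 (inv_pos.2 hd)⟩
        have h := hδ _ hx
        rw [← hpow _ hx, rpow_inv_rpow ht.1.le hd.ne'] at h
        rwa [hcδ, ← hc₀])
    by_contra! hlt
    nlinarith [hδ₀I.1, hδI.1]
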